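/- Szegő's equidistribution theorem: Let φ be a real-valued function in L^∞ of the unit circle with m ≤ φ(e^{iθ}) ≤ M almost everywhere. Then for each n the Toeplitz matrix T_n(φ) is Hermitian with all eigenvalues λ_1^{(n)}, …, λ_n^{(n)} lying in [m, M], and for every continuous function F on the interval [m, M], (1/n)·(F(λ_1^{(n)}) + ⋯ + F(λ_n^{(n)})) converges, as n → ∞, to (1/2π)∫_{-π}^{π} F(φ(e^{iθ})) dθ. -/

import Mathlib

/-!
Let `u_i` be an orthonormal eigenbasis of `T_n(φ)` with eigenvalues `λ_i`, and let
`p_i(θ) = |∑ₖ u_i(k) e^{ikθ}|²`. Then `∫ p_i dθ/2π = 1` and `∑ᵢ p_i(θ) = n`, so that `p_i / n` is a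
coupling of the uniform measure on the indices `i` with normalized Lebesgue measure in `θ`
(`integral_norm_sq_trigPoly`, `sum_norm_sq_trigPoly`). The quadratic form of the Toeplitz matrix
gives `λ_i = ∫ φ p_i dθ/2π` (`eigenvalues_eq_integral`): the eigenvalues are conditional
expectations of `φ`. In particular they lie in `[m, M]`, and the mean square distance between
`λ_i` and `φ(θ)` under the coupling equals `∫ φ² dθ/2π - (1/n) ∑ λ_i²`.

Since `∑ λ_i² = ∑_{j,k} |φ_{j-k}|²` is a sum of the first `n` symmetric partial sums of
`∑ |φ_ℓ|²`, Parseval's identity and Cesàro's theorem show that this distance tends to `0`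
(`tendsto_sum_sq_eigenvalues`). A continuous `F` satisfies `|F x - F y| ≤ ε + C (x - y)²` on
`[m, M]`, hence the means of `F(λ_i)` and of `F(φ(θ))` have the same limit
(`abs_mean_sub_integral_le`).
-/

open MeasureTheory Filter Topology

/-- The `ℓ`-th Fourier coefficient of a function `θ ↦ φ(e^{iθ})` on the unit circle. -/
noncomputable def fourierCoeff' (φ : ℝ → ℂ) (ℓ : ℤ) : ℂ :=
  ((2 * Real.pi : ℝ) : ℂ)⁻¹ *
    ∫ θ in (-Real.pi)..Real.pi, Complex.exp (-Complex.I * (ℓ : ℂ) * (θ : ℂ)) * φ θ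

/-- The `n × n` Toeplitz matrix `T_n(φ) = (φ_{j-k})_{0 ≤ j,k ≤ n-1}`. -/
noncomputable def toeplitzMatrix (φ : ℝ → ℂ) (n : ℕ) : Matrix (Fin n) (Fin n) ℂ :=
  Matrix.of fun j k : Fin n => fourierCoeff' φ ((j : ℤ) - (k : ℤ))

/-! ### Normalized Lebesgue measure and Fourier coefficients -/

/-- The normalized Lebesgue measure `dθ / 2π` on `(-π, π]`. -/
noncomputable def circleMeasure : Measure ℝ :=
  ENNReal.ofReal (2 * Real.pi)⁻¹ • volume.restrict (Set.Ioc (-Real.pi) Real.pi)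

instance : IsProbabilityMeasure circleMeasure := by
  constructor
  have h : (0 : ℝ) < 2 * Real.pi := by positivity
  rw [circleMeasure, Measure.smul_apply, Measure.restrict_apply_univ, Real.volume_Ioc, smul_eq_mul,
    ← ENNReal.ofReal_mul (by positivity)]
  rw [show Real.pi - -Real.pi = 2 * Real.pi by ring, inv_mul_cancel₀ h.ne', ENNReal.ofReal_one]

lemma integral_circleMeasure {E : Type*} [NormedAddCommGroup E] [NormedSpace ℝ E] (f : ℝ → E) :
    ∫ θ, f θ ∂circleMeasure = (2 * Real.pi)⁻¹ • ∫ θ in (-Real.pi)..Real.pi, f θ := by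
  rw [circleMeasure, integral_smul_measure, ENNReal.toReal_ofReal (by positivity),
    intervalIntegral.integral_of_le (by linarith [Real.pi_pos])]

lemma fourierCoeff'_eq_integral (φ : ℝ → ℂ) (ℓ : ℤ) :
    fourierCoeff' φ ℓ =
      ∫ θ : ℝ, Complex.exp (-Complex.I * (ℓ : ℂ) * (θ : ℂ)) * φ θ ∂circleMeasure := by
  rw [integral_circleMeasure, fourierCoeff', Complex.real_smul, Complex.ofReal_inv]

lemma ae_circleMeasure {p : ℝ → Prop} (h : ∀ᵐ θ ∂(volume : Measure ℝ), p θ) :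
    ∀ᵐ θ ∂circleMeasure, p θ :=
  Measure.ae_smul_measure (ae_restrict_of_ae h) _

lemma fourierCoeff'_neg (φ : ℝ → ℝ) (ℓ : ℤ) :
    fourierCoeff' (fun θ => (φ θ : ℂ)) (-ℓ) =
      star (fourierCoeff' (fun θ => (φ θ : ℂ)) ℓ) := by
  rw [fourierCoeff'_eq_integral, fourierCoeff'_eq_integral, Complex.star_def, ← integral_conj]
  congr 1
  ext θ
  simp [← Complex.exp_conj]

lemma toeplitzMatrix_isHermitian (φ : ℝ → ℝ) (n : ℕ) :
    (toeplitzMatrix (fun θ => (φ θ : ℂ)) n).IsHermitian := by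
  ext j k
  rw [Matrix.conjTranspose_apply, toeplitzMatrix, Matrix.of_apply, Matrix.of_apply,
    ← fourierCoeff'_neg, neg_sub]

lemma fourierCoeff'_one (ℓ : ℤ) :
    fourierCoeff' (fun _ => ((1 : ℝ) : ℂ)) ℓ = if ℓ = 0 then 1 else 0 := by
  have h : ((2 * Real.pi : ℝ) : ℂ) ≠ 0 := by
    exact_mod_cast (by positivity : (2 * Real.pi : ℝ) ≠ 0)
  split_ifs with hl
  · subst hl
    rw [fourierCoeff'_eq_integral]
    simp
  · have hc : -Complex.I * (ℓ : ℂ) ≠ 0 := by simp [hl]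
    simp only [fourierCoeff', Complex.ofReal_one, mul_one]
    rw [integral_exp_mul_complex hc]
    have : Complex.exp (-Complex.I * ℓ * (Real.pi : ℝ)) =
        Complex.exp (-Complex.I * ℓ * ((-Real.pi : ℝ) : ℂ)) := by
      rw [Complex.exp_eq_exp_iff_exists_int]
      exact ⟨-ℓ, by push_cast; ring⟩
    rw [this]
    simp

/-! ### The quadratic form of a Toeplitz matrix -/

/-- The trigonometric polynomial `∑ₖ uₖ e^{ikθ}`. -/
noncomputable def trigPoly {n : ℕ} (u : Fin n → ℂ) (θ : ℝ) : ℂ :=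
  ∑ k : Fin n, u k * Complex.exp (Complex.I * (k : ℂ) * (θ : ℂ))

lemma continuous_trigPoly {n : ℕ} (u : Fin n → ℂ) : Continuous (trigPoly u) := by
  unfold trigPoly
  fun_prop

lemma norm_trigPoly_le {n : ℕ} (u : Fin n → ℂ) (θ : ℝ) : ‖trigPoly u θ‖ ≤ ∑ k, ‖u k‖ := by
  refine (norm_sum_le _ _).trans (Finset.sum_le_sum fun k _ => ?_)
  rw [norm_mul, Complex.norm_exp]
  simp

/-- A continuous function of a bounded symbol stays integrable against the density
`‖trigPoly u‖²`. -/
lemma integrable_comp_mul {φ : ℝ → ℝ} {m M : ℝ} (hmeas : Measurable φ)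
    (hbd : ∀ᵐ θ ∂circleMeasure, φ θ ∈ Set.Icc m M) {G : ℝ → ℝ} (hG : Continuous G)
    {n : ℕ} (u : Fin n → ℂ) :
    Integrable (fun θ => G (φ θ) * ‖trigPoly u θ‖ ^ 2) circleMeasure := by
  obtain ⟨K, hK⟩ := (isCompact_Icc (a := m) (b := M)).exists_bound_of_continuousOn hG.continuousOn
  refine Integrable.of_bound
    ((hG.measurable.comp hmeas).mul
      ((continuous_trigPoly u).norm.pow 2).measurable).aestronglyMeasurable
    (K * (∑ k, ‖u k‖) ^ 2) ?_
  filter_upwards [hbd] with θ hθ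
  rw [norm_mul, norm_pow, norm_norm]
  have := norm_trigPoly_le u θ
  have h1 := hK _ hθ
  have h2 := (norm_nonneg _).trans h1
  gcongr

lemma integrable_comp {φ : ℝ → ℝ} {m M : ℝ} (hmeas : Measurable φ)
    (hbd : ∀ᵐ θ ∂circleMeasure, φ θ ∈ Set.Icc m M) {G : ℝ → ℝ} (hG : Continuous G) :
    Integrable (fun θ => G (φ θ)) circleMeasure := by
  obtain ⟨K, hK⟩ := (isCompact_Icc (a := m) (b := M)).exists_bound_of_continuousOn hG.continuousOn
  refine Integrable.of_bound (hG.measurable.comp hmeas).aestronglyMeasurable K ?_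
  filter_upwards [hbd] with θ hθ using hK _ hθ

/-- The quadratic form of `T_n(φ)` at `u` is the integral of `φ` against `‖trigPoly u‖²`. -/
lemma star_dotProduct_toeplitzMatrix {φ : ℝ → ℝ} (hφ : Integrable φ circleMeasure) {n : ℕ}
    (u : Fin n → ℂ) :
    star u ⬝ᵥ (toeplitzMatrix (fun θ => (φ θ : ℂ)) n).mulVec u =
      ((∫ θ, φ θ * ‖trigPoly u θ‖ ^ 2 ∂circleMeasure : ℝ) : ℂ) := by
  have hint : ∀ ℓ : ℤ, Integrable
      (fun θ : ℝ => Complex.exp (-Complex.I * (ℓ : ℂ) * (θ : ℂ)) * (φ θ : ℂ)) circleMeasure := by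
    intro ℓ
    refine hφ.ofReal.bdd_mul (c := 1)
      (by fun_prop : Continuous _).aestronglyMeasurable (ae_of_all _ fun θ => ?_)
    rw [Complex.norm_exp]
    simp
  have hpt : ∀ θ : ℝ, ((φ θ * ‖trigPoly u θ‖ ^ 2 : ℝ) : ℂ) = ∑ j : Fin n, ∑ k : Fin n,
      (star (u j) * u k) *
        (Complex.exp (-Complex.I * (((j : ℤ) - (k : ℤ) : ℤ) : ℂ) * (θ : ℂ)) * (φ θ : ℂ)) := by
    intro θ
    push_cast
    rw [← Complex.conj_mul', trigPoly, map_sum, Finset.sum_mul_sum, Finset.mul_sum]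
    refine Finset.sum_congr rfl fun j _ => ?_
    rw [Finset.mul_sum]
    refine Finset.sum_congr rfl fun k _ => ?_
    rw [map_mul, ← Complex.exp_conj,
      show -Complex.I * ((j : ℂ) - (k : ℂ)) * (θ : ℂ) =
        (starRingEnd ℂ) (Complex.I * (j : ℂ) * (θ : ℂ)) + Complex.I * (k : ℂ) * (θ : ℂ) by
        simp; ring, Complex.exp_add]
    simp only [Complex.star_def]
    ring
  rw [← integral_complex_ofReal, integral_congr_ae (ae_of_all _ hpt), integral_finsetSum]
  · rw [dotProduct]
    refine Finset.sum_congr rfl fun j _ => ?_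
    rw [integral_finsetSum _ fun k _ => (hint _).const_mul _, Matrix.mulVec, dotProduct,
      Finset.mul_sum]
    refine Finset.sum_congr rfl fun k _ => ?_
    rw [integral_const_mul, ← fourierCoeff'_eq_integral, toeplitzMatrix, Matrix.of_apply,
      Pi.star_apply]
    ring
  · exact fun j _ => integrable_finsetSum _ fun k _ => (hint _).const_mul _

lemma integral_norm_sq_trigPoly {n : ℕ} (u : EuclideanSpace ℂ (Fin n)) :
    ∫ θ, ‖trigPoly u θ‖ ^ 2 ∂circleMeasure = ‖u‖ ^ 2 := by
  have h := star_dotProduct_toeplitzMatrix (φ := fun _ => 1) (integrable_const _) u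
  have h1 : toeplitzMatrix (fun _ => ((1 : ℝ) : ℂ)) n = 1 := by
    ext j k
    rw [toeplitzMatrix, Matrix.of_apply, fourierCoeff'_one, Matrix.one_apply]
    simp [sub_eq_zero, Fin.ext_iff]
  rw [h1, Matrix.one_mulVec] at h
  simp only [one_mul] at h
  rw [EuclideanSpace.norm_sq_eq]
  have h2 : ((∑ i, ‖u i‖ ^ 2 : ℝ) : ℂ) = star (u : Fin n → ℂ) ⬝ᵥ (u : Fin n → ℂ) := by
    rw [dotProduct]
    push_cast
    refine Finset.sum_congr rfl fun i _ => ?_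
    rw [Pi.star_apply, Complex.star_def, Complex.conj_mul']
  exact_mod_cast (h2.trans h).symm

/-- For an orthonormal basis `b` of `ℂⁿ` the densities `‖trigPoly (b i)‖² / n` form a partition
of unity. -/
lemma sum_norm_sq_trigPoly {n : ℕ} (b : OrthonormalBasis (Fin n) ℂ (EuclideanSpace ℂ (Fin n)))
    (θ : ℝ) : ∑ i, ‖trigPoly (b i) θ‖ ^ 2 = n := by
  let w : EuclideanSpace ℂ (Fin n) :=
    WithLp.toLp 2 fun k => Complex.exp (-Complex.I * (k : ℂ) * (θ : ℂ))
  have hw : ‖w‖ ^ 2 = n := by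
    rw [EuclideanSpace.norm_sq_eq]
    simp [w, Complex.norm_exp]
  rw [← hw, ← b.sum_sq_norm_inner_left w]
  refine Finset.sum_congr rfl fun i _ => ?_
  congr 2
  rw [PiLp.inner_apply, trigPoly]
  refine Finset.sum_congr rfl fun k _ => ?_
  simp [w, ← Complex.exp_conj]

/-! ### Sums of squared eigenvalues -/

/-- The squared eigenvalues sum to the squared Frobenius norm. -/
lemma sum_sq_eigenvalues {n : ℕ} {A : Matrix (Fin n) (Fin n) ℂ} (hA : A.IsHermitian) :
    ∑ i, hA.eigenvalues i ^ 2 = ∑ j, ∑ k, ‖A j k‖ ^ 2 := by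
  have h1 : ∀ i, hA.eigenvalues i ^ 2 =
      ∑ j, ‖A.mulVec (hA.eigenvectorBasis i) j‖ ^ 2 := by
    intro i
    have hn : ∑ j, ‖hA.eigenvectorBasis i j‖ ^ 2 = 1 := by
      rw [← EuclideanSpace.norm_sq_eq, hA.eigenvectorBasis.orthonormal.1 i, one_pow]
    rw [hA.mulVec_eigenvectorBasis]
    simp only [Pi.smul_apply, norm_smul, mul_pow, ← Finset.mul_sum, hn]
    simp
  simp_rw [h1]
  rw [Finset.sum_comm]
  refine Finset.sum_congr rfl fun j _ => ?_
  let w : EuclideanSpace ℂ (Fin n) := WithLp.toLp 2 fun k => star (A j k)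
  have hw : ‖w‖ ^ 2 = ∑ k, ‖A j k‖ ^ 2 := by
    rw [EuclideanSpace.norm_sq_eq]
    simp [w]
  rw [← hw, ← hA.eigenvectorBasis.sum_sq_norm_inner_left w]
  refine Finset.sum_congr rfl fun i _ => ?_
  congr 2
  rw [PiLp.inner_apply, Matrix.mulVec, dotProduct]
  refine Finset.sum_congr rfl fun k _ => ?_
  simp [w, mul_comm]

/-- A double sum over differences is a sum of symmetric partial sums: passing from `n` to `n + 1`
adds one row and one column, that is, each difference in `[-n, n]` once. -/
lemma sum_sum_sub_eq (g : ℤ → ℝ) (n : ℕ) :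
    ∑ j : Fin n, ∑ k : Fin n, g ((j : ℤ) - (k : ℤ)) =
      ∑ r ∈ Finset.range n, ∑ ℓ ∈ Finset.Icc (-(r : ℤ)) r, g ℓ := by
  have hIcc : ∀ r : ℕ, ∑ ℓ ∈ Finset.Icc (-(r : ℤ)) r, g ℓ =
      ∑ j ∈ Finset.range r, g ((j : ℤ) - r) + ∑ k ∈ Finset.range (r + 1), g ((r : ℤ) - k) := by
    intro r
    have hu : Finset.Icc (-(r : ℤ)) r =
        (Finset.range r).image (fun j : ℕ => (j : ℤ) - r) ∪
          (Finset.range (r + 1)).image (fun k : ℕ => (r : ℤ) - k) := by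
      ext ℓ
      simp only [Finset.mem_Icc, Finset.mem_union, Finset.mem_image, Finset.mem_range]
      constructor
      · rintro ⟨h1, h2⟩
        by_cases h : ℓ < 0
        · exact Or.inl ⟨(ℓ + r).toNat, by omega, by omega⟩
        · exact Or.inr ⟨(r - ℓ).toNat, by omega, by omega⟩
      · rintro (⟨a, ha, rfl⟩ | ⟨a, ha, rfl⟩) <;> constructor <;> omega
    rw [hu, Finset.sum_union, Finset.sum_image, Finset.sum_image]
    · intro a _ b _ h
      simp only at h
      omega
    · intro a _ b _ h
      simp only at h
      omega
    · rw [Finset.disjoint_left]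
      simp only [Finset.mem_image, Finset.mem_range]
      rintro x ⟨a, ha, rfl⟩ ⟨b, hb, h⟩
      omega
  have hfin : ∀ n : ℕ, ∑ j : Fin n, ∑ k : Fin n, g ((j : ℤ) - (k : ℤ)) =
      ∑ j ∈ Finset.range n, ∑ k ∈ Finset.range n, g ((j : ℤ) - (k : ℤ)) := by
    intro n
    rw [← Fin.sum_univ_eq_sum_range (fun j => ∑ k ∈ Finset.range n, g ((j : ℤ) - (k : ℤ)))]
    refine Finset.sum_congr rfl fun j _ => ?_
    rw [← Fin.sum_univ_eq_sum_range (fun k => g ((j : ℤ) - (k : ℤ)))]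
  rw [hfin]
  induction n with
  | zero => simp
  | succ n ih =>
    rw [Finset.sum_range_succ (fun r : ℕ => ∑ ℓ ∈ Finset.Icc (-(r : ℤ)) r, g ℓ) n, ← ih, hIcc,
      Finset.sum_range_succ (fun j : ℕ => ∑ k ∈ Finset.range (n + 1), g ((j : ℤ) - k)) n]
    simp_rw [Finset.sum_range_succ (fun k : ℕ => g (_ - (k : ℤ))) n, Finset.sum_add_distrib]
    ring

/-- Parseval's identity for the coefficients `fourierCoeff'`. -/
lemma hasSum_norm_sq_fourierCoeff' {φ : ℝ → ℝ} {m M : ℝ} (hmeas : Measurable φ)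
    (hbd : ∀ᵐ θ ∂(volume : Measure ℝ), φ θ ∈ Set.Icc m M) :
    HasSum (fun ℓ : ℤ => ‖fourierCoeff' (fun θ => (φ θ : ℂ)) ℓ‖ ^ 2)
      (∫ θ, φ θ ^ 2 ∂circleMeasure) := by
  have hlt : -Real.pi < Real.pi := by linarith [Real.pi_pos]
  have hL2 : MemLp (fun θ => (φ θ : ℂ)) 2
      (volume.restrict (Set.Ioc (-Real.pi) Real.pi)) := by
    refine MemLp.of_bound (Complex.measurable_ofReal.comp hmeas).aestronglyMeasurable
      (max |m| |M|) ?_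
    filter_upwards [ae_restrict_of_ae hbd] with θ hθ
    rw [Complex.norm_real]
    exact abs_le_max_abs_abs hθ.1 hθ.2
  have h := hasSum_sq_fourierCoeffOn hlt hL2
  have hpi : Real.pi - -Real.pi = 2 * Real.pi := by ring
  convert h using 1
  · ext ℓ
    rw [fourierCoeffOn_eq_integral, fourierCoeff', Complex.real_smul]
    congr 3
    · rw [hpi, one_div, Complex.ofReal_inv]
    · congr 1
      ext θ
      rw [fourier_coe_apply, smul_eq_mul]
      congr 2
      have h0 : (Real.pi : ℂ) ≠ 0 := by exact_mod_cast Real.pi_ne_zero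
      push_cast
      field_simp
      ring
  · rw [integral_circleMeasure, hpi]
    simp

lemma tendsto_sum_sq_eigenvalues {φ : ℝ → ℝ} {m M : ℝ} (hmeas : Measurable φ)
    (hbd : ∀ᵐ θ ∂(volume : Measure ℝ), φ θ ∈ Set.Icc m M)
    (hH : ∀ n : ℕ, (toeplitzMatrix (fun θ => (φ θ : ℂ)) n).IsHermitian) :
    Tendsto (fun n : ℕ => (n : ℝ)⁻¹ * ∑ i, (hH n).eigenvalues i ^ 2) atTop
      (𝓝 (∫ θ, φ θ ^ 2 ∂circleMeasure)) := by
  have h := ((hasSum_norm_sq_fourierCoeff' hmeas hbd).comp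
    (Finset.tendsto_Icc_neg (R := ℤ))).cesaro
  refine h.congr fun n => ?_
  rw [sum_sq_eigenvalues]
  simp only [toeplitzMatrix, Matrix.of_apply]
  rw [sum_sum_sub_eq (fun ℓ => ‖fourierCoeff' (fun θ => (φ θ : ℂ)) ℓ‖ ^ 2)]
  rfl

/-! ### Eigenvalues as averages of the symbol -/

lemma eigenvalues_eq_integral {φ : ℝ → ℝ} (hφ : Integrable φ circleMeasure) {n : ℕ}
    (hA : (toeplitzMatrix (fun θ => (φ θ : ℂ)) n).IsHermitian) (i : Fin n) :
    hA.eigenvalues i = ∫ θ, φ θ * ‖trigPoly (hA.eigenvectorBasis i) θ‖ ^ 2 ∂circleMeasure := by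
  rw [hA.eigenvalues_eq, star_dotProduct_toeplitzMatrix hφ]
  exact Complex.ofReal_re _

lemma eigenvalues_mem_Icc {φ : ℝ → ℝ} {m M : ℝ} (hmeas : Measurable φ)
    (hbd : ∀ᵐ θ ∂circleMeasure, φ θ ∈ Set.Icc m M) {n : ℕ}
    (hA : (toeplitzMatrix (fun θ => (φ θ : ℂ)) n).IsHermitian) (i : Fin n) :
    hA.eigenvalues i ∈ Set.Icc m M := by
  have hone : ∀ c : ℝ, ∫ θ, c * ‖trigPoly (hA.eigenvectorBasis i) θ‖ ^ 2 ∂circleMeasure = c := by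
    intro c
    rw [integral_const_mul, integral_norm_sq_trigPoly, hA.eigenvectorBasis.orthonormal.1 i]
    simp
  have hi : ∀ {G : ℝ → ℝ} (_ : Continuous G), Integrable
      (fun θ => G (φ θ) * ‖trigPoly (hA.eigenvectorBasis i) θ‖ ^ 2) circleMeasure :=
    fun hG => integrable_comp_mul hmeas hbd hG _
  rw [eigenvalues_eq_integral (integrable_comp hmeas hbd continuous_id)]
  constructor
  · rw [← hone m]
    refine integral_mono_ae (hi (continuous_const (y := m))) (hi continuous_id) ?_
    filter_upwards [hbd] with θ hθ
    exact mul_le_mul_of_nonneg_right hθ.1 (by positivity)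
  · rw [← hone M]
    refine integral_mono_ae (hi continuous_id) (hi (continuous_const (y := M))) ?_
    filter_upwards [hbd] with θ hθ
    exact mul_le_mul_of_nonneg_right hθ.2 (by positivity)

/-! ### Equidistribution -/

/-- A quadratic modulus of continuity on a compact interval. -/
lemma exists_abs_sub_le {F : ℝ → ℝ} (hF : Continuous F) (m M : ℝ) {ε : ℝ} (hε : 0 < ε) :
    ∃ C : ℝ, 0 ≤ C ∧ ∀ x ∈ Set.Icc m M, ∀ y ∈ Set.Icc m M,
      |F x - F y| ≤ ε + C * (x - y) ^ 2 := by
  obtain ⟨K, hK⟩ := (isCompact_Icc (a := m) (b := M)).exists_bound_of_continuousOn hF.continuousOn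
  obtain ⟨δ, hδ, h⟩ := Metric.uniformContinuousOn_iff.1
    ((isCompact_Icc (a := m) (b := M)).uniformContinuousOn_of_continuous hF.continuousOn) ε hε
  refine ⟨2 * |K| / δ ^ 2, by positivity, fun x hx y hy => ?_⟩
  by_cases hxy : dist x y < δ
  · have h1 := (h x hx y hy hxy).le
    rw [Real.dist_eq] at h1
    have : 0 ≤ 2 * |K| / δ ^ 2 * (x - y) ^ 2 := by positivity
    linarith
  · have h1 : δ ^ 2 ≤ (x - y) ^ 2 := by
      rw [← sq_abs (x - y), ← Real.dist_eq]
      gcongr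
      exact not_lt.1 hxy
    have h2 : 2 * |K| ≤ 2 * |K| / δ ^ 2 * (x - y) ^ 2 := by
      rw [div_mul_eq_mul_div, le_div_iff₀ (by positivity)]
      gcongr
    have h3 : |F x - F y| ≤ |F x| + |F y| := abs_sub _ _
    have h4 := hK x hx
    have h5 := hK y hy
    rw [Real.norm_eq_abs] at h4 h5
    linarith [le_abs_self K]

/-- The coupling estimate. The parenthesis on the right is the mean square distance between `λ_i`
and `φ(θ)` under the weights `‖trigPoly (u_i) θ‖² / n`, where `u_i` is the orthonormal eigenbasis;
the two means on the left are the means of `F(λ_i)` and `F(φ(θ))` under the same weights. -/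
lemma abs_mean_sub_integral_le {φ : ℝ → ℝ} {m M : ℝ} (hmeas : Measurable φ)
    (hbd : ∀ᵐ θ ∂circleMeasure, φ θ ∈ Set.Icc m M) {n : ℕ} (hn : 0 < n)
    (hA : (toeplitzMatrix (fun θ => (φ θ : ℂ)) n).IsHermitian)
    {F : ℝ → ℝ} (hF : Continuous F) {ε C : ℝ}
    (hC : ∀ x ∈ Set.Icc m M, ∀ y ∈ Set.Icc m M, |F x - F y| ≤ ε + C * (x - y) ^ 2) :
    |(∑ i, F (hA.eigenvalues i)) / n - ∫ θ, F (φ θ) ∂circleMeasure| ≤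
      ε + C * (∫ θ, φ θ ^ 2 ∂circleMeasure - (n : ℝ)⁻¹ * ∑ i, hA.eigenvalues i ^ 2) := by
  have hn' : (0 : ℝ) < n := by exact_mod_cast hn
  set p : Fin n → ℝ → ℝ := fun i θ => ‖trigPoly (hA.eigenvectorBasis i) θ‖ ^ 2 with hp
  have hi : ∀ {G : ℝ → ℝ} (_ : Continuous G) (i : Fin n), Integrable
      (fun θ => G (φ θ) * p i θ) circleMeasure :=
    fun hG i => integrable_comp_mul hmeas hbd hG _
  have hone : ∀ i, ∫ θ, p i θ ∂circleMeasure = 1 := by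
    intro i
    simp only [hp]
    rw [integral_norm_sq_trigPoly, hA.eigenvectorBasis.orthonormal.1 i, one_pow]
  have hlam : ∀ i, ∫ θ, φ θ * p i θ ∂circleMeasure = hA.eigenvalues i := fun i =>
    (eigenvalues_eq_integral (integrable_comp hmeas hbd continuous_id) hA i).symm
  have hip : ∀ i, Integrable (p i) circleMeasure := fun i => by
    simpa using hi (continuous_const (y := 1)) i
  -- Integrating against all the densities gives `n` times the plain mean.
  have hsum : ∀ {G : ℝ → ℝ}, Continuous G →
      ∑ i, ∫ θ, G (φ θ) * p i θ ∂circleMeasure = n * ∫ θ, G (φ θ) ∂circleMeasure := by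
    intro G hG
    rw [← integral_finsetSum _ fun i _ => hi hG i, ← integral_const_mul]
    congr 1
    ext θ
    rw [← Finset.mul_sum, sum_norm_sq_trigPoly, mul_comm]
  have hterm : ∀ i, |F (hA.eigenvalues i) - ∫ θ, F (φ θ) * p i θ ∂circleMeasure| ≤
      ε + C * (∫ θ, φ θ ^ 2 * p i θ ∂circleMeasure - hA.eigenvalues i ^ 2) := by
    intro i
    set l := hA.eigenvalues i with hl
    have hlm : l ∈ Set.Icc m M := eigenvalues_mem_Icc hmeas hbd hA i
    have e1 : F l - ∫ θ, F (φ θ) * p i θ ∂circleMeasure =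
        ∫ θ, (F l - F (φ θ)) * p i θ ∂circleMeasure := by
      simp_rw [sub_mul]
      rw [integral_sub ((hip i).const_mul _) (hi hF i), integral_const_mul, hone, mul_one]
    have e2 : ∫ θ, (ε + C * (l - φ θ) ^ 2) * p i θ ∂circleMeasure =
        ε + C * (∫ θ, φ θ ^ 2 * p i θ ∂circleMeasure - l ^ 2) := by
      have : ∀ θ, (ε + C * (l - φ θ) ^ 2) * p i θ =
          (ε + C * l ^ 2) * p i θ - (2 * C * l) * (φ θ * p i θ) + C * (φ θ ^ 2 * p i θ) :=
        fun θ => by ring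
      simp_rw [this]
      have i1 := (hip i).const_mul (ε + C * l ^ 2)
      have i2 := (hi continuous_id i).const_mul (2 * C * l)
      have i3 := (hi (continuous_pow 2) i).const_mul C
      simp only [id] at i2
      rw [integral_add (by exact i1.sub i2) i3, integral_sub i1 i2, integral_const_mul, integral_const_mul,
        integral_const_mul, hone, hlam]
      ring
    rw [e1, ← e2, ← Real.norm_eq_abs]
    refine norm_integral_le_of_norm_le
      (hi (G := fun x => ε + C * (l - x) ^ 2) (by fun_prop) i) ?_
    filter_upwards [hbd] with θ hθ
    have h0 : 0 ≤ p i θ := by positivity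
    rw [norm_mul, Real.norm_eq_abs, Real.norm_of_nonneg h0]
    exact mul_le_mul_of_nonneg_right (hC l hlm _ hθ) h0
  have key : |∑ i, F (hA.eigenvalues i) - n * ∫ θ, F (φ θ) ∂circleMeasure| ≤
      n * ε + C * (n * ∫ θ, φ θ ^ 2 ∂circleMeasure - ∑ i, hA.eigenvalues i ^ 2) := by
    rw [← hsum hF, ← hsum (continuous_pow 2), ← Finset.sum_sub_distrib, ← Finset.sum_sub_distrib]
    refine (Finset.abs_sum_le_sum_abs _ _).trans ((Finset.sum_le_sum fun i _ => hterm i).trans ?_)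
    rw [Finset.sum_add_distrib, ← Finset.mul_sum]
    simp
  have e3 : (∑ i, F (hA.eigenvalues i)) / n - ∫ θ, F (φ θ) ∂circleMeasure =
      (∑ i, F (hA.eigenvalues i) - n * ∫ θ, F (φ θ) ∂circleMeasure) / n := by
    field_simp
  rw [e3, abs_div, abs_of_pos hn', div_le_iff₀ hn']
  refine key.trans_eq ?_
  field_simp

/-- **Szegő's equidistribution theorem.** If `φ` is a real-valued `L^∞` symbol with
`m ≤ φ ≤ M` a.e., then each Toeplitz matrix `T_n(φ)` is Hermitian with eigenvalues in
`[m, M]`, and for every continuous `F` on `[m, M]` the averages of `F` over the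
eigenvalues converge to `(1/2π) ∫_{-π}^{π} F(φ(e^{iθ})) dθ`. -/
theorem szego_equidistribution
    (φ : ℝ → ℝ) (m M : ℝ) (hmeas : Measurable φ)
    (hper : Function.Periodic φ (2 * Real.pi))
    (hbd : ∀ᵐ θ ∂(volume : Measure ℝ), m ≤ φ θ ∧ φ θ ≤ M) :
    (∀ n : ℕ, (toeplitzMatrix (fun θ => (φ θ : ℂ)) n).IsHermitian) ∧
    ∀ hH : ∀ n : ℕ, (toeplitzMatrix (fun θ => (φ θ : ℂ)) n).IsHermitian,
      (∀ (n : ℕ) (i : Fin n), (hH n).eigenvalues i ∈ Set.Icc m M) ∧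
      ∀ F : ℝ → ℝ, ContinuousOn F (Set.Icc m M) →
        Tendsto (fun n : ℕ => (∑ i : Fin n, F ((hH n).eigenvalues i)) / n)
          atTop
          (𝓝 ((2 * Real.pi)⁻¹ * ∫ θ in (-Real.pi)..Real.pi, F (φ θ))) := by
  have hbd' : ∀ᵐ θ ∂circleMeasure, φ θ ∈ Set.Icc m M := ae_circleMeasure hbd
  refine ⟨toeplitzMatrix_isHermitian φ, fun hH =>
    ⟨fun n i => eigenvalues_mem_Icc hmeas hbd' (hH n) i,
    fun F hF => ?_⟩⟩
  obtain ⟨θ₀, hθ₀⟩ := hbd.exists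
  have hmM : m ≤ M := hθ₀.1.trans hθ₀.2
  -- `F` may be replaced by a continuous function on the whole line.
  set G : ℝ → ℝ := Set.IccExtend hmM ((Set.Icc m M).domRestrict F) with hG
  have hGc : Continuous G := hF.domRestrict.Icc_extend'
  have hGF : ∀ x ∈ Set.Icc m M, G x = F x := fun x hx => by
    rw [hG, Set.IccExtend_of_mem hmM _ hx, Set.domRestrict_apply]
  have e1 : (2 * Real.pi)⁻¹ * ∫ θ in (-Real.pi)..Real.pi, F (φ θ) =
      ∫ θ, G (φ θ) ∂circleMeasure := by
    rw [← smul_eq_mul, ← integral_circleMeasure]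
    refine integral_congr_ae ?_
    filter_upwards [hbd'] with θ hθ using (hGF _ hθ).symm
  have e2 : ∀ n : ℕ, ∑ i, F ((hH n).eigenvalues i) = ∑ i, G ((hH n).eigenvalues i) := fun n =>
    Finset.sum_congr rfl fun i _ => (hGF _ (eigenvalues_mem_Icc hmeas hbd' (hH n) i)).symm
  simp_rw [e2]
  rw [e1, Metric.tendsto_atTop']
  intro ε hε
  obtain ⟨C, hC0, hC⟩ := exists_abs_sub_le hGc m M (half_pos hε)
  have hlim : Tendsto (fun n : ℕ => ε / 2 + C * (∫ θ, φ θ ^ 2 ∂circleMeasure -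
      (n : ℝ)⁻¹ * ∑ i, (hH n).eigenvalues i ^ 2)) atTop (𝓝 (ε / 2)) := by
    have h := (((tendsto_sum_sq_eigenvalues hmeas hbd hH).const_sub
      (∫ θ, φ θ ^ 2 ∂circleMeasure)).const_mul C).const_add (ε / 2)
    rwa [sub_self, mul_zero, add_zero] at h
  obtain ⟨N, hN⟩ := eventually_atTop.1 (hlim.eventually_lt_const (half_lt_self hε))
  refine ⟨N, fun n hn => ?_⟩
  rw [Real.dist_eq]
  exact (abs_mean_sub_integral_le hmeas hbd' (Nat.zero_lt_of_lt hn) (hH n) hGc hC).trans_lt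
    (hN n hn.le)
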